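/- (Theorem 1, deterministic form.) Let X ∈ ℝ^{s×d}, let L ∈ ℝ^{s×s} be orthogonal, and let b_1,…,b_s ≥ 1 be natural numbers. Set Y := L * X and for each row i let y_i denote the i-th row of Y. Define Ŷ row-wise by min-max quantization: if range(y_i) > 0 then Ŷ_{ij} := round(y_{ij}/s_i)·s_i with s_i := range(y_i)/(2^{b_i} − 1), and Ŷ_i := y_i if range(y_i) = 0. Then the squared Frobenius norm satisfies ‖L⁻¹ * Ŷ − X‖² ≤ (d/2) · ∑_{i=1}^s ‖y_i‖² / (2^{b_i} − 1)². -/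

import Mathlib

/-- The range of a vector: `max_j y_j − min_j y_j`. -/
noncomputable def vrange {d : ℕ} (y : Fin d → ℝ) : ℝ := (⨆ j, y j) - (⨅ j, y j)

/-- Min-max scale of a row `y` at bit width `b`. -/
noncomputable def mmScale {d : ℕ} (y : Fin d → ℝ) (b : ℕ) : ℝ :=
  vrange y / ((2 : ℝ) ^ b - 1)

/-- Min-max quantize–dequantize of a row `y` at bit width `b`: each coordinate is
reconstructed as `round(y_j / s)·s` when `range(y) > 0`, and left unchanged otherwise. -/
noncomputable def mmDequant {d : ℕ} (y : Fin d → ℝ) (b : ℕ) : Fin d → ℝ :=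
  fun j =>
    if 0 < vrange y then (round (y j / mmScale y b) : ℝ) * mmScale y b else y j

/-!
Since `L` preserves the Frobenius norm, the reconstruction error `L⁻¹ Ŷ − X` has the same norm as
`L (L⁻¹ Ŷ − X) = Ŷ − L X`, the quantization error of the rows of `Y = L X`. Rounding to a grid of
mesh `c` moves a coordinate by at most `c / 2`, and the range `y p − y q` of a row satisfies
`(y p − y q)² ≤ 2 (y p² + y q²) ≤ 2 ‖y‖²`.
-/

lemma sq_sub_le_two_mul_sum_sq {ι R : Type*} [Fintype ι] [CommRing R] [LinearOrder R]
    [IsStrictOrderedRing R] (y : ι → R) (p q : ι) :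
    (y p - y q) ^ 2 ≤ 2 * ∑ j, y j ^ 2 := by
  classical
  obtain rfl | hpq := eq_or_ne p q
  · rw [sub_self, zero_pow two_ne_zero]
    positivity
  · calc (y p - y q) ^ 2 ≤ 2 * (y p ^ 2 + y q ^ 2) := by linarith [sq_nonneg (y p + y q)]
      _ = 2 * ∑ j ∈ {p, q}, y j ^ 2 := by rw [Finset.sum_pair hpq]
      _ ≤ 2 * ∑ j, y j ^ 2 := by
        gcongr
        exact Finset.subset_univ _

lemma abs_round_div_mul_sub_le {K : Type*} [Field K] [LinearOrder K] [IsStrictOrderedRing K]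
    [FloorRing K] {c : K} (hc : c ≠ 0) (x : K) :
    |round (x / c) * c - x| ≤ |c| / 2 :=
  calc |round (x / c) * c - x| = |x / c - round (x / c)| * |c| := by
        rw [← abs_mul, sub_mul, div_mul_cancel₀ x hc, abs_sub_comm]
    _ ≤ 1 / 2 * |c| := by gcongr; exact abs_sub_round _
    _ = |c| / 2 := by ring

lemma sum_sum_sq_eq_trace_transpose_mul_self {m n R : Type*} [Fintype m] [Fintype n]
    [CommSemiring R] (A : Matrix m n R) :
    ∑ i, ∑ j, A i j ^ 2 = (A.transpose * A).trace := by
  simp only [Matrix.trace, Matrix.diag_apply, Matrix.mul_apply, Matrix.transpose_apply, sq]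
  exact Finset.sum_comm

lemma sum_sum_sq_mul_of_transpose_mul_self_eq_one {l m n R : Type*} [Fintype l] [Fintype m]
    [DecidableEq m] [Fintype n] [CommSemiring R] {U : Matrix l m R} (hU : U.transpose * U = 1)
    (A : Matrix m n R) :
    ∑ i, ∑ j, (U * A) i j ^ 2 = ∑ i, ∑ j, A i j ^ 2 := by
  rw [sum_sum_sq_eq_trace_transpose_mul_self, sum_sum_sq_eq_trace_transpose_mul_self,
    Matrix.transpose_mul, Matrix.mul_assoc, ← Matrix.mul_assoc U.transpose, hU, Matrix.one_mul]

lemma vrange_sq_le {d : ℕ} (y : Fin d → ℝ) : vrange y ^ 2 ≤ 2 * ∑ j, y j ^ 2 := by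
  obtain _ | _ := isEmpty_or_nonempty (Fin d)
  · simp [vrange]
  · obtain ⟨p, hp⟩ := exists_eq_ciSup_of_finite (f := y)
    obtain ⟨q, hq⟩ := exists_eq_ciInf_of_finite (f := y)
    rw [vrange, ← hp, ← hq]
    exact sq_sub_le_two_mul_sum_sq y p q

lemma mmScale_sq_le {d : ℕ} (y : Fin d → ℝ) (b : ℕ) :
    mmScale y b ^ 2 ≤ 2 * ((∑ j, y j ^ 2) / ((2 : ℝ) ^ b - 1) ^ 2) := by
  rw [mmScale, div_pow, ← mul_div_assoc]
  gcongr
  exact vrange_sq_le y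

lemma mmScale_pos {d : ℕ} {y : Fin d → ℝ} (hy : 0 < vrange y) {b : ℕ} (hb : b ≠ 0) :
    0 < mmScale y b :=
  div_pos hy (sub_pos.mpr (one_lt_pow₀ one_lt_two hb))

lemma sq_mmDequant_sub_le {d : ℕ} (y : Fin d → ℝ) {b : ℕ} (hb : b ≠ 0) (j : Fin d) :
    (mmDequant y b j - y j) ^ 2 ≤ mmScale y b ^ 2 / 4 := by
  by_cases hy : 0 < vrange y
  · calc (mmDequant y b j - y j) ^ 2
        = |round (y j / mmScale y b) * mmScale y b - y j| ^ 2 := by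
          rw [mmDequant, if_pos hy, sq_abs]
      _ ≤ (|mmScale y b| / 2) ^ 2 := by
          gcongr
          exact abs_round_div_mul_sub_le (mmScale_pos hy hb).ne' (y j)
      _ = mmScale y b ^ 2 / 4 := by
          rw [div_pow, sq_abs]
          norm_num
  · rw [mmDequant, if_neg hy, sub_self, zero_pow two_ne_zero]
    positivity

lemma sum_sq_mmDequant_sub_le {d : ℕ} (y : Fin d → ℝ) {b : ℕ} (hb : b ≠ 0) :
    ∑ j, (mmDequant y b j - y j) ^ 2 ≤
      (d : ℝ) / 2 * ((∑ j, y j ^ 2) / ((2 : ℝ) ^ b - 1) ^ 2) :=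
  calc ∑ j, (mmDequant y b j - y j) ^ 2
      ≤ ∑ _j : Fin d, mmScale y b ^ 2 / 4 :=
        Finset.sum_le_sum fun j _ => sq_mmDequant_sub_le y hb j
    _ = (d : ℝ) / 4 * mmScale y b ^ 2 := by
        rw [Fin.sum_const, nsmul_eq_mul]
        ring
    _ ≤ (d : ℝ) / 4 * (2 * ((∑ j, y j ^ 2) / ((2 : ℝ) ^ b - 1) ^ 2)) := by
        gcongr
        exact mmScale_sq_le y b
    _ = (d : ℝ) / 2 * ((∑ j, y j ^ 2) / ((2 : ℝ) ^ b - 1) ^ 2) := by ring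

/-- **Theorem 1, deterministic form.** For orthogonal `L` and row-wise
min-max quantization of `Y = L X` at bit widths `b i ≥ 1`,
`‖L⁻¹ Ŷ − X‖² ≤ (d/2) · ∑ i ‖y_i‖² / (2^{b_i} − 1)²`. -/
theorem stamp_ubound_deterministic
    (s d : ℕ) (X : Matrix (Fin s) (Fin d) ℝ)
    (L : Matrix (Fin s) (Fin s) ℝ) (hL : L.transpose * L = 1)
    (b : Fin s → ℕ) (hb : ∀ i, 1 ≤ b i) :
    (∑ i, ∑ j,
        ((L⁻¹ * (Matrix.of fun i => mmDequant ((L * X) i) (b i)) - X) i j) ^ 2) ≤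
      ((d : ℝ) / 2) *
        ∑ i, (∑ j, ((L * X) i j) ^ 2) / ((2 : ℝ) ^ (b i) - 1) ^ 2 := by
  set Y := L * X
  set Q := Matrix.of fun i => mmDequant (Y i) (b i)
  have hLinv : L * (L⁻¹ * Q - X) = Q - Y := by
    rw [Matrix.mul_sub, Matrix.mul_nonsing_inv_cancel_left L Q
      (Matrix.isUnit_det_of_left_inverse hL)]
  calc ∑ i, ∑ j, (L⁻¹ * Q - X) i j ^ 2
      = ∑ i, ∑ j, (mmDequant (Y i) (b i) j - Y i j) ^ 2 := by
        rw [← sum_sum_sq_mul_of_transpose_mul_self_eq_one hL, hLinv]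
        rfl
    _ ≤ ∑ i, (d : ℝ) / 2 * ((∑ j, Y i j ^ 2) / ((2 : ℝ) ^ b i - 1) ^ 2) :=
        Finset.sum_le_sum fun i _ =>
          sum_sq_mmDequant_sub_le (Y i) (Nat.one_le_iff_ne_zero.mp (hb i))
    _ = (d : ℝ) / 2 * ∑ i, (∑ j, Y i j ^ 2) / ((2 : ℝ) ^ b i - 1) ^ 2 :=
        (Finset.mul_sum ..).symm
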